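/- arXiv:2005.09424 — 2 statements merged into one kernel-verified Lean document; each statement's English description precedes it below -/
import Mathlib

section
/- Under the hypotheses of the previous implicit-function lemma (F differentiable with F'(y)y ≥ F(y), and y = ȳ(x) defined by F(y) = E_{y+x}[Φ(η)²] for x ≥ 0), the function Ψ₁(x) := E_{ȳ(x)+x}[Φ(η)²] / x is decreasing on (0,∞). -/
open MeasureTheory ProbabilityTheory Real Set

/-- Gaussian expectation with mean `b` and variance `σ`. -/
noncomputable def gE (b σ : ℝ) (f : ℝ → ℝ) : ℝ :=
  ∫ x, f x ∂(gaussianReal b σ.toNNReal)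

/-!
Rescaling by `√σ` turns `E_{b,σ}[Φ²] / σ` into the expectation of `Φ(√σ w)² / σ` for
`w ~ N(b / √σ, 1)`. Increasing `σ` decreases the integrand, because `Φ u / u` decreases on `(0, ∞)`
by concavity, and moves the mean towards `0`, which lowers the expectation of an even function
increasing in `|w|`. Hence `E_{b,σ}[Φ²] / σ` is strictly decreasing in `σ`.

Now put `A x = E_{b,ȳ x + x}[Φ²] = F (ȳ x)` and let `x₁ < x₂`. If `ȳ x₂ < ȳ x₁`, then
`A x₂ ≤ A x₁`, as `F` is increasing. Otherwise write `x / A x = (ȳ x + x) / A x - ȳ x / F (ȳ x)`: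
the first term strictly increases by the above, and `y / F y` decreases because `F y / y` increases.
-/

lemma integral_lt_integral_of_ae_lt {α : Type*} [MeasurableSpace α] {μ : Measure α} [NeZero μ]
    {f g : α → ℝ} (hf : Integrable f μ) (hg : Integrable g μ) (hlt : ∀ᵐ a ∂μ, f a < g a) :
    ∫ a, f a ∂μ < ∫ a, g a ∂μ := by
  have hle : f ≤ᵐ[μ] g := hlt.mono fun _ => le_of_lt
  refine (integral_mono_ae hf hg hle).lt_of_ne fun heq => ?_
  obtain ⟨a, ha_eq, ha_lt⟩ := (((integral_eq_iff_of_ae_le hf hg hle).1 heq).and hlt).exists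
  exact ha_lt.ne ha_eq

section EvenFunctions

variable {f : ℝ → ℝ}

lemma even_apply_abs (hf : f.Even) (u : ℝ) : f |u| = f u := by
  rcases abs_choice u with h | h <;> rw [h]
  exact hf u

lemma apply_le_apply_of_abs_le (hf : f.Even) (hmono : MonotoneOn f (Ici 0)) {u v : ℝ}
    (huv : |u| ≤ |v|) : f u ≤ f v := by
  rw [← even_apply_abs hf u, ← even_apply_abs hf v]
  exact hmono (abs_nonneg u) (abs_nonneg v) huv

lemma measurable_of_even_of_monotoneOn (hf : f.Even) (hmono : MonotoneOn f (Ici 0)) :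
    Measurable f := by
  have hmono_max : Monotone fun u => f (max 0 u) := fun u v huv =>
    hmono (le_max_left 0 u) (le_max_left 0 v) (max_le_max le_rfl huv)
  have hf_eq : f = (fun u => f (max 0 u)) ∘ abs := by
    ext u
    simp only [Function.comp_apply, max_eq_right (abs_nonneg u), even_apply_abs hf]
  rw [hf_eq]
  exact hmono_max.measurable.comp measurable_abs

lemma abs_apply_le_of_antitoneOn_div_sq (hf : f.Even) (hmono : MonotoneOn f (Ici 0))
    (hanti : AntitoneOn (fun u => f u / u ^ 2) (Ioi 0)) (u : ℝ) :
    |f u| ≤ (|f 0| + |f 1|) * (1 + u ^ 2) := by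
  have hlower : f 0 ≤ f u := apply_le_apply_of_abs_le hf hmono (by simp)
  have hupper : f u ≤ |f 1| * (1 + u ^ 2) := by
    rcases le_or_gt |u| 1 with hu | hu
    · have hle : f u ≤ f 1 := apply_le_apply_of_abs_le hf hmono (by simpa using hu)
      nlinarith [le_abs_self (f 1), mul_nonneg (abs_nonneg (f 1)) (sq_nonneg u)]
    · have hle := hanti (mem_Ioi.2 one_pos) (mem_Ioi.2 (one_pos.trans hu)) hu.le
      simp only [even_apply_abs hf, sq_abs, one_pow, div_one] at hle
      rw [div_le_iff₀ (by rw [← sq_abs]; positivity)] at hle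
      nlinarith [le_abs_self (f 1), abs_nonneg (f 1), sq_nonneg u]
  have hsq : 0 ≤ |f 0| * u ^ 2 := by positivity
  rw [abs_le]
  constructor
  · nlinarith [neg_abs_le (f 0), mul_nonneg (abs_nonneg (f 1)) (sq_nonneg u), abs_nonneg (f 1)]
  · nlinarith [abs_nonneg (f 0)]

end EvenFunctions

section Anderson

variable {p g : ℝ → ℝ} {c c' w : ℝ}

lemma abs_add_sub_le_of_abs_sub_le (hc : |c'| ≤ |c|) (hne : c ≠ c') (hw : |w - c| ≤ |w - c'|) :
    |c + c' - w| ≤ |w| := by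
  rw [← sq_le_sq] at hc hw ⊢
  have hcc : 0 ≤ (c - c') * (c + c') := by linarith
  have hside : 0 ≤ (c - c') * (2 * w - c - c') := by linarith
  have hprod : 0 ≤ (c - c') ^ 2 * ((c + c') * (2 * w - c - c')) := by
    linarith [mul_nonneg hcc hside]
  have := nonneg_of_mul_nonneg_right hprod (by have := sub_ne_zero.2 hne; positivity)
  linarith

lemma sub_mul_sub_reflection_nonneg (hp : p.Even) (hp_anti : AntitoneOn p (Ici 0))
    (hg : g.Even) (hg_mono : MonotoneOn g (Ici 0)) (hc : |c'| ≤ |c|) (w : ℝ) :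
    0 ≤ (p (w - c) - p (w - c')) * (g w - g (c + c' - w)) := by
  have hp_le {u v : ℝ} (huv : |u| ≤ |v|) : p v ≤ p u :=
    neg_le_neg_iff.1 <| apply_le_apply_of_abs_le (f := -p) (fun u => congrArg Neg.neg (hp u))
      hp_anti.neg huv
  rcases eq_or_ne c c' with rfl | hne
  · simp
  rcases le_total |w - c| |w - c'| with hw | hw
  · have hrefl := abs_add_sub_le_of_abs_sub_le hc hne hw
    exact mul_nonneg (sub_nonneg.2 (hp_le hw))
      (sub_nonneg.2 (apply_le_apply_of_abs_le hg hg_mono hrefl))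
  · have hrefl : |c + c' - (c + c' - w)| ≤ |c + c' - w| := by
      refine abs_add_sub_le_of_abs_sub_le hc hne ?_
      rwa [show c + c' - w - c = c' - w by ring, show c + c' - w - c' = c - w by ring,
        abs_sub_comm c', abs_sub_comm c]
    rw [sub_sub_cancel] at hrefl
    exact mul_nonneg_of_nonpos_of_nonpos (sub_nonpos.2 (hp_le hw))
      (sub_nonpos.2 (apply_le_apply_of_abs_le hg hg_mono hrefl))

/-- The one-dimensional case of Anderson's inequality. Reflecting `w` in the midpoint of `c` and
`c'` exchanges the two translates of `p`, so twice the difference of the integrals is the integral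
of `(p (w - c) - p (w - c')) * (g w - g (c + c' - w))`. -/
lemma integral_translate_mul_le_of_abs_le (hp : p.Even) (hp_anti : AntitoneOn p (Ici 0))
    (hg : g.Even) (hg_mono : MonotoneOn g (Ici 0)) (hint : Integrable fun w => p (w - c) * g w)
    (hint' : Integrable fun w => p (w - c') * g w) (hc : |c'| ≤ |c|) :
    ∫ w, p (w - c') * g w ≤ ∫ w, p (w - c) * g w := by
  have hrefl (w : ℝ) : p (c + c' - w - c) = p (w - c') := by rw [← hp]; congr 1; ring
  have hrefl' (w : ℝ) : p (c + c' - w - c') = p (w - c) := by rw [← hp]; congr 1; ring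
  have hint_refl := hint.comp_sub_left (c + c')
  have hint_refl' := hint'.comp_sub_left (c + c')
  have heq := integral_sub_left_eq_self (fun w => p (w - c) * g w) volume (c + c')
  have heq' := integral_sub_left_eq_self (fun w => p (w - c') * g w) volume (c + c')
  simp only [hrefl, hrefl'] at hint_refl hint_refl' heq heq'
  have hsub : Integrable fun w => p (w - c) * g w - p (w - c') * g w := hint.sub hint'
  have hsub_refl : Integrable fun w => p (w - c') * g (c + c' - w) - p (w - c) * g (c + c' - w) :=
    hint_refl.sub hint_refl'
  have hnonneg : 0 ≤ ∫ w, ((p (w - c) * g w - p (w - c') * g w) +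
      (p (w - c') * g (c + c' - w) - p (w - c) * g (c + c' - w))) :=
    integral_nonneg fun w =>
      (sub_mul_sub_reflection_nonneg hp hp_anti hg hg_mono hc w).trans_eq (by ring)
  rw [integral_add hsub hsub_refl, integral_sub hint hint',
    integral_sub hint_refl hint_refl', heq, heq'] at hnonneg
  linarith

end Anderson

section Gaussian

open scoped NNReal

variable {f g : ℝ → ℝ} {c c' μ t : ℝ} {v : ℝ≥0}

lemma even_gaussianPDFReal_zero (v : ℝ≥0) : (gaussianPDFReal 0 v).Even := fun w => by
  simp [gaussianPDFReal]

lemma antitoneOn_gaussianPDFReal_zero (v : ℝ≥0) : AntitoneOn (gaussianPDFReal 0 v) (Ici 0) := by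
  intro a ha b _ hab
  rw [mem_Ici] at ha
  simp only [gaussianPDFReal, sub_zero]
  gcongr

lemma gaussianPDFReal_zero_sub (c : ℝ) (v : ℝ≥0) (w : ℝ) :
    gaussianPDFReal 0 v (w - c) = gaussianPDFReal c v w := by
  rw [gaussianPDFReal_sub, zero_add]

lemma integrable_gaussianReal_iff (hv : v ≠ 0) :
    Integrable f (gaussianReal μ v) ↔ Integrable fun w => gaussianPDFReal μ v w * f w := by
  rw [gaussianReal_of_var_ne_zero μ hv, integrable_withDensity_iff_integrable_smul'
    (measurable_gaussianPDF μ v) (ae_of_all _ fun _ => gaussianPDF_lt_top)]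
  simp only [toReal_gaussianPDF, smul_eq_mul]

lemma integral_gaussianReal_le_of_abs_mean_le (hg : g.Even) (hg_mono : MonotoneOn g (Ici 0))
    (hint : Integrable g (gaussianReal c v)) (hint' : Integrable g (gaussianReal c' v))
    (hc : |c'| ≤ |c|) :
    ∫ w, g w ∂(gaussianReal c' v) ≤ ∫ w, g w ∂(gaussianReal c v) := by
  rcases eq_or_ne v 0 with rfl | hv
  · simpa using apply_le_apply_of_abs_le hg hg_mono hc
  simp only [integrable_gaussianReal_iff hv, ← gaussianPDFReal_zero_sub c,
    ← gaussianPDFReal_zero_sub c'] at hint hint'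
  simp only [integral_gaussianReal_eq_integral_smul hv, smul_eq_mul, ← gaussianPDFReal_zero_sub c,
    ← gaussianPDFReal_zero_sub c']
  exact integral_translate_mul_le_of_abs_le (even_gaussianPDFReal_zero v)
    (antitoneOn_gaussianPDFReal_zero v) hg hg_mono hint hint' hc

lemma integrable_gaussianReal_of_antitoneOn_div_sq (hf : f.Even) (hmono : MonotoneOn f (Ici 0))
    (hanti : AntitoneOn (fun u => f u / u ^ 2) (Ioi 0)) (μ : ℝ) (v : ℝ≥0) :
    Integrable f (gaussianReal μ v) := by
  have hsq : Integrable (fun u : ℝ => u ^ 2) (gaussianReal μ v) :=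
    (memLp_id_gaussianReal 2).integrable_sq
  exact (((integrable_const 1).add hsq).const_mul (|f 0| + |f 1|)).mono'
    (measurable_of_even_of_monotoneOn hf hmono).aestronglyMeasurable
    (ae_of_all _ (abs_apply_le_of_antitoneOn_div_sq hf hmono hanti))

lemma integrable_comp_mul_gaussianReal (ht : t ≠ 0)
    (hf : Integrable f (gaussianReal (t * μ) (.mk (t ^ 2) (sq_nonneg t) * v))) :
    Integrable (fun w => f (t * w)) (gaussianReal μ v) := by
  rwa [← gaussianReal_map_const_mul, (measurableEmbedding_mulLeft₀ ht).integrable_map_iff] at hf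

lemma gaussianReal_sq_eq_map (μ : ℝ) (ht : t ≠ 0) :
    gaussianReal μ (t ^ 2).toNNReal = (gaussianReal (μ / t) 1).map (t * ·) := by
  rw [gaussianReal_map_const_mul, mul_div_cancel₀ _ ht, mul_one, Real.toNNReal_of_nonneg]

lemma gE_sq (b : ℝ) (ht : t ≠ 0) (f : ℝ → ℝ) :
    gE b (t ^ 2) f = ∫ w, f (t * w) ∂(gaussianReal (b / t) 1) := by
  rw [gE, gaussianReal_sq_eq_map b ht, (measurableEmbedding_mulLeft₀ ht).integral_map]

lemma gE_nonneg (b σ : ℝ) (hf : 0 ≤ f) : 0 ≤ gE b σ f :=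
  integral_nonneg hf

end Gaussian

section GuerraLatala

variable {f : ℝ → ℝ} {s t w : ℝ}

lemma apply_mul_div_sq_lt (hf : f.Even) (hanti : StrictAntiOn (fun u => f u / u ^ 2) (Ioi 0))
    (hs : 0 < s) (hst : s < t) (hw : w ≠ 0) : f (t * w) / t ^ 2 < f (s * w) / s ^ 2 := by
  have hw_pos : 0 < |w| := abs_pos.2 hw
  have ht : 0 < t := hs.trans hst
  have habs {r : ℝ} (hr : 0 < r) : f (r * |w|) = f (r * w) := by
    rw [← even_apply_abs hf (r * w), abs_mul, abs_of_pos hr]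
  have hlt := hanti (mem_Ioi.2 (mul_pos hs hw_pos)) (mem_Ioi.2 (mul_pos ht hw_pos))
    (mul_lt_mul_of_pos_right hst hw_pos)
  simp only [habs hs, habs ht, mul_pow, ← div_div] at hlt
  exact (div_lt_div_iff_of_pos_right (by positivity)).1 hlt

/-- The Guerra–Latala lemma, with an even function in place of the paper's `Φ²`. -/
theorem strictAntiOn_gE_div_self (hf : f.Even) (hmono : MonotoneOn f (Ici 0))
    (hanti : StrictAntiOn (fun u => f u / u ^ 2) (Ioi 0)) (b : ℝ) :
    StrictAntiOn (fun σ => gE b σ f / σ) (Ioi 0) := by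
  suffices hsq : ∀ ⦃s t : ℝ⦄, 0 < s → s < t →
      gE b (t ^ 2) f / t ^ 2 < gE b (s ^ 2) f / s ^ 2 by
    intro σ hσ τ hτ hστ
    simpa only [sq_sqrt (mem_Ioi.1 hσ).le, sq_sqrt (mem_Ioi.1 hτ).le] using
      hsq (sqrt_pos.2 hσ) (sqrt_lt_sqrt (mem_Ioi.1 hσ).le hστ)
  intro s t hs hst
  have ht : 0 < t := hs.trans hst
  have hint {r : ℝ} (hr : 0 < r) (c : ℝ) :
      Integrable (fun w => f (r * w) / r ^ 2) (gaussianReal c 1) :=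
    (integrable_comp_mul_gaussianReal hr.ne' <|
      integrable_gaussianReal_of_antitoneOn_div_sq hf hmono hanti.antitoneOn _ _).div_const _
  have heven : Function.Even fun w => f (t * w) / t ^ 2 := fun w => by simp only [mul_neg, hf.eq]
  have hmono_scaled : MonotoneOn (fun w => f (t * w) / t ^ 2) (Ici 0) := fun u hu w hw huw =>
    div_le_div_of_nonneg_right (hmono (mul_nonneg ht.le hu) (mul_nonneg ht.le hw)
      (mul_le_mul_of_nonneg_left huw ht.le)) (sq_nonneg t)
  have hmean : |b / t| ≤ |b / s| := by
    rw [abs_div, abs_div, abs_of_pos hs, abs_of_pos ht]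
    gcongr
  have := nullSingletonClass_gaussianReal (μ := b / s) one_ne_zero
  rw [gE_sq b hs.ne', gE_sq b ht.ne', ← integral_div, ← integral_div]
  calc ∫ w, f (t * w) / t ^ 2 ∂(gaussianReal (b / t) 1)
      ≤ ∫ w, f (t * w) / t ^ 2 ∂(gaussianReal (b / s) 1) :=
        integral_gaussianReal_le_of_abs_mean_le heven hmono_scaled (hint ht _) (hint ht _) hmean
    _ < ∫ w, f (s * w) / s ^ 2 ∂(gaussianReal (b / s) 1) :=
        integral_lt_integral_of_ae_lt (hint ht _) (hint hs _)
          ((Measure.ae_ne _ 0).mono fun w hw => apply_mul_div_sq_lt hf hanti hs hst hw)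

end GuerraLatala

lemma strictAntiOn_div_self_of_strictConcaveOn {φ : ℝ → ℝ} (h0 : φ 0 = 0)
    (hconc : StrictConcaveOn ℝ (Ici 0) φ) : StrictAntiOn (fun u => φ u / u) (Ioi 0) := by
  intro u hu v hv huv
  simpa [h0] using hconc.secant_strict_mono (mem_Ici.2 le_rfl) (Ioi_subset_Ici_self hu)
    (Ioi_subset_Ici_self hv) (ne_of_gt hu) (ne_of_gt hv) huv

theorem strictAntiOn_gE_sq_div_self {Φ : ℝ → ℝ} (hodd : Φ.Odd) (hmono : MonotoneOn Φ (Ici 0))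
    (hconc : StrictConcaveOn ℝ (Ici 0) Φ) (b : ℝ) :
    StrictAntiOn (fun σ => gE b σ (fun u => Φ u ^ 2) / σ) (Ioi 0) := by
  have hΦ_nonneg {u : ℝ} (hu : 0 ≤ u) : 0 ≤ Φ u :=
    hodd.map_zero.symm.le.trans (hmono (mem_Ici.2 le_rfl) hu hu)
  refine strictAntiOn_gE_div_self (fun u => by rw [hodd.eq, neg_sq]) (fun u hu v hv huv => ?_)
    (fun u hu v hv huv => ?_) b
  · exact pow_le_pow_left₀ (hΦ_nonneg hu) (hmono hu hv huv) 2
  · simp only [← div_pow]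
    exact pow_lt_pow_left₀ (strictAntiOn_div_self_of_strictConcaveOn hodd.map_zero hconc hu hv huv)
      (div_nonneg (hΦ_nonneg (le_of_lt hv)) (le_of_lt hv)) two_ne_zero

lemma strictConcaveOn_Ici_of_mul_deriv_deriv_neg {φ : ℝ → ℝ} (hcont : ContinuousOn φ (Ici 0))
    (hconc : ∀ x > 0, x * deriv (deriv φ) x < 0) : StrictConcaveOn ℝ (Ici 0) φ := by
  refine strictConcaveOn_of_deriv2_neg (convex_Ici 0) hcont fun x hx => ?_
  rw [interior_Ici] at hx
  exact neg_of_mul_neg_right (hconc x hx) (le_of_lt hx)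

lemma monotoneOn_div_self_of_le_deriv_mul {F : ℝ → ℝ}
    (hdiff : ∀ y ∈ Ioi (0 : ℝ), DifferentiableAt ℝ F y)
    (hle : ∀ y ∈ Ioi (0 : ℝ), F y ≤ deriv F y * y) : MonotoneOn (fun y => F y / y) (Ioi 0) := by
  have hderiv : ∀ y ∈ Ioi (0 : ℝ), HasDerivAt (fun y => F y / y)
      ((deriv F y * y - F y * 1) / y ^ 2) y := fun y hy =>
    (hdiff y hy).hasDerivAt.div (hasDerivAt_id y) (ne_of_gt hy)
  refine monotoneOn_of_hasDerivWithinAt_nonneg (convex_Ioi 0)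
    (fun y hy => (hderiv y hy).continuousAt.continuousWithinAt)
    (fun y hy => (hderiv y (interior_subset hy)).hasDerivWithinAt) fun y hy => ?_
  have := hle y (interior_subset hy)
  exact div_nonneg (by linarith) (sq_nonneg y)

lemma pos_of_strictAntiOn_div_self {E : ℝ → ℝ} (hE_nonneg : ∀ σ ∈ Ioi (0 : ℝ), 0 ≤ E σ)
    (hE : StrictAntiOn (fun σ => E σ / σ) (Ioi 0)) {σ : ℝ} (hσ : 0 < σ) : 0 < E σ := by
  have hσ' : 0 < σ + 1 := by positivity
  have hquot : 0 < E σ / σ :=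
    (div_nonneg (hE_nonneg _ hσ') hσ'.le).trans_lt (hE hσ hσ' (lt_add_one σ))
  exact (div_pos_iff_of_pos_right hσ).1 hquot

theorem strictAntiOn_div_of_implicit {E F y : ℝ → ℝ} (hE_nonneg : ∀ σ ∈ Ioi (0 : ℝ), 0 ≤ E σ)
    (hE : StrictAntiOn (fun σ => E σ / σ) (Ioi 0)) (hF : MonotoneOn (fun u => F u / u) (Ioi 0))
    (hy : ∀ x ∈ Ioi (0 : ℝ), 0 < y x) (heq : ∀ x ∈ Ioi (0 : ℝ), F (y x) = E (y x + x)) :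
    StrictAntiOn (fun x => E (y x + x) / x) (Ioi 0) := by
  intro x₁ hx₁ x₂ hx₂ hx
  have hy₁ := hy x₁ hx₁
  have hy₂ := hy x₂ hx₂
  have heq₁ := heq x₁ hx₁
  have heq₂ := heq x₂ hx₂
  rw [mem_Ioi] at hx₁ hx₂
  have hE_pos : 0 < E (y x₁ + x₁) := pos_of_strictAntiOn_div_self hE_nonneg hE (by positivity)
  rw [div_lt_div_iff₀ hx₂ hx₁]
  rcases lt_or_ge (y x₂) (y x₁) with hlt | hge
  · have hquot := hF hy₂ hy₁ hlt.le
    simp only [heq₁, heq₂] at hquot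
    rw [div_le_div_iff₀ hy₂ hy₁] at hquot
    have hE_le : E (y x₂ + x₂) ≤ E (y x₁ + x₁) :=
      le_of_mul_le_mul_right (hquot.trans (mul_le_mul_of_nonneg_left hlt.le hE_pos.le)) hy₁
    calc E (y x₂ + x₂) * x₁ ≤ E (y x₁ + x₁) * x₁ := mul_le_mul_of_nonneg_right hE_le hx₁.le
      _ < E (y x₁ + x₁) * x₂ := mul_lt_mul_of_pos_left hx hE_pos
  · have hquot := hF hy₁ hy₂ hge
    have hquot_sum := hE (mem_Ioi.2 (add_pos hy₁ hx₁)) (mem_Ioi.2 (add_pos hy₂ hx₂))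
      (add_lt_add_of_le_of_lt hge hx)
    simp only [heq₁, heq₂] at hquot
    rw [div_le_div_iff₀ hy₁ hy₂] at hquot
    rw [div_lt_div_iff₀ (by positivity) (by positivity)] at hquot_sum
    linarith

theorem psi_one_decreasing_general {Φ F ybar : ℝ → ℝ} (hodd : Φ.Odd)
    (hmono : MonotoneOn Φ (Ici 0)) (hconc : StrictConcaveOn ℝ (Ici 0) Φ) (b : ℝ)
    (hF : MonotoneOn (fun y => F y / y) (Ioi 0)) (hypos : ∀ x ∈ Ioi (0 : ℝ), 0 < ybar x)
    (heq : ∀ x ∈ Ioi (0 : ℝ), F (ybar x) = gE b (ybar x + x) (fun u => Φ u ^ 2)) :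
    StrictAntiOn (fun x => gE b (ybar x + x) (fun u => Φ u ^ 2) / x) (Ioi 0) :=
  strictAntiOn_div_of_implicit (fun σ _ => gE_nonneg b σ fun u => sq_nonneg (Φ u))
    (strictAntiOn_gE_sq_div_self hodd hmono hconc b) hF hypos heq

/-- Lemma 6 of the paper: with `F` differentiable satisfying
`F'(y) y ≥ F(y)` and `ȳ(x)` defined implicitly by `F(ȳ(x)) = E_{b,ȳ(x)+x}[Φ²]`
for `x ≥ 0`, the function `Ψ₁(x) = E_{b,ȳ(x)+x}[Φ²]/x` is decreasing on
`(0,∞)`. -/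
theorem psi_one_decreasing
    (Φ : ℝ → ℝ) (hC2 : ContDiff ℝ 2 Φ) (hmono : StrictMono Φ)
    (hodd : ∀ x, Φ (-x) = -Φ x)
    (hconc : ∀ x ≠ 0, x * deriv (deriv Φ) x < 0)
    (hint : Integrable (fun x => |Φ x|) (gaussianReal 0 1))
    (b : ℝ) (F : ℝ → ℝ)
    (hFpos : ∀ y ∈ Ioi (0:ℝ), 0 < F y)
    (hFdiff : ∀ y ∈ Ioi (0:ℝ), DifferentiableAt ℝ F y)
    (hFconv : ∀ y ∈ Ioi (0:ℝ), F y ≤ deriv F y * y)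
    (ybar : ℝ → ℝ)
    (hypos : ∀ x ≥ (0:ℝ), 0 < ybar x)
    (hydiff : ∀ x ∈ Ioi (0:ℝ), DifferentiableAt ℝ ybar x)
    (heq : ∀ x ≥ (0:ℝ), F (ybar x) = gE b (ybar x + x) (fun u => Φ u ^ 2)) :
    StrictAntiOn (fun x => gE b (ybar x + x) (fun u => Φ u ^ 2) / x) (Ioi 0) := by
  have hΦ : StrictConcaveOn ℝ (Ici 0) Φ :=
    strictConcaveOn_Ici_of_mul_deriv_deriv_neg hC2.continuous.continuousOn
      fun x hx => hconc x (ne_of_gt hx)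
  exact psi_one_decreasing_general hodd (hmono.monotone.monotoneOn _) hΦ b
    (monotoneOn_div_self_of_le_deriv_mul hFdiff hFconv)
    (fun x hx => hypos x (le_of_lt hx)) (fun x hx => heq x (le_of_lt hx))
end

section
/- (Interpolation sum rule) For every q = (q₁,…,q_ν) ∈ [0,1]^ν: E[A_N(β)] + (β²/2) Σ_{|x−y|=1} α_x α_y ∫₀¹ E E⟨(R^{(x)}₁₂ − q_x)(R^{(y)}₁₂ − q_y)⟩_t dt = Σ_{x=1}^ν α_x E_{0,1}[log cosh(b_x + βη √(Σ_{|y−x|=1} α_y q_y))] + (β²/2) Σ_{|x−y|=1} α_x α_y (1 − q_x)(1 − q_y). -/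
open MeasureTheory ProbabilityTheory Real Set
open scoped BigOperators

noncomputable section

namespace DRBM

/-- `±1` spin attached to a Boolean. -/
def sg (s : Bool) : ℝ := if s then 1 else -1

/-- Configurations: `ν` layers, each using the first `Nv x` of `N` sites. -/
abbrev Config (ν N : ℕ) := Fin ν → Fin N → Bool

/-- Quenched weights: `ξ x i j` couples site `i` of layer `x` with site `j`
of layer `x+1`. -/
abbrev Weights (ν N : ℕ) := Fin ν → Fin N → Fin N → ℝ

/-- External Gaussian fields for the interpolation. -/
abbrev Fields (ν N : ℕ) := Fin ν → Fin N → ℝ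

/-- i.i.d. standard Gaussian law of the weights. -/
def μW (ν N : ℕ) : Measure (Weights ν N) :=
  Measure.pi fun _ => Measure.pi fun _ => Measure.pi fun _ => gaussianReal 0 1

/-- i.i.d. standard Gaussian law of the fields. -/
def μF (ν N : ℕ) : Measure (Fields ν N) :=
  Measure.pi fun _ => Measure.pi fun _ => gaussianReal 0 1

/-- The deep RBM Hamiltonian
`H_N(σ) = −Σ_{x} Σ_{i<N_x, j<N_{x+1}} ξ^x_{ij}/√N σ^x_i σ^{x+1}_j`. -/
def ham (ν N : ℕ) (Nv : Fin ν → ℕ) (ξ : Weights ν N) (σ : Config ν N) : ℝ :=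
  - ∑ x : Fin ν, ∑ y : Fin ν,
      (if (y : ℕ) = (x : ℕ) + 1 then
        ∑ i : Fin N, ∑ j : Fin N,
          (if (i : ℕ) < Nv x ∧ (j : ℕ) < Nv y then
            ξ x i j / Real.sqrt N * sg (σ x i) * sg (σ y j)
          else 0)
      else 0)

/-- `Qv x = Σ_{|y−x|=1} α_y q_y`. -/
def Qv (ν : ℕ) (α q : Fin ν → ℝ) (x : Fin ν) : ℝ :=
  ∑ y : Fin ν,
    (if (y : ℕ) = (x : ℕ) + 1 ∨ (y : ℕ) + 1 = (x : ℕ) then α y * q y else 0)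

/-- The one-body interpolating Hamiltonian
`H'_N(σ) = Σ_x √(Σ_{|y−x|=1} α_y q_y) Σ_i η^x_i σ^x_i`. -/
def ham' (ν N : ℕ) (Nv : Fin ν → ℕ) (α q : Fin ν → ℝ) (η : Fields ν N)
    (σ : Config ν N) : ℝ :=
  ∑ x : Fin ν, Real.sqrt (Qv ν α q x) *
    ∑ i : Fin N, (if (i : ℕ) < Nv x then η x i * sg (σ x i) else 0)

/-- Interpolating Hamiltonian `H_{N,t} = √t H_N + √(1−t) H'_N`. -/
def hamT (ν N : ℕ) (Nv : Fin ν → ℕ) (α q : Fin ν → ℝ) (t : ℝ)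
    (ξ : Weights ν N) (η : Fields ν N) (σ : Config ν N) : ℝ :=
  Real.sqrt t * ham ν N Nv ξ σ + Real.sqrt (1 - t) * ham' ν N Nv α q η σ

/-- Bias term `Σ_x b_x Σ_i σ^x_i`. -/
def bias (ν N : ℕ) (Nv : Fin ν → ℕ) (b : Fin ν → ℝ) (σ : Config ν N) : ℝ :=
  ∑ x : Fin ν, b x * ∑ i : Fin N, (if (i : ℕ) < Nv x then sg (σ x i) else 0)

/-- Boltzmann weight of a configuration along the interpolation. -/
def bw (ν N : ℕ) (Nv : Fin ν → ℕ) (α q : Fin ν → ℝ) (β t : ℝ)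
    (b : Fin ν → ℝ) (ξ : Weights ν N) (η : Fields ν N) (σ : Config ν N) : ℝ :=
  Real.exp (-β * hamT ν N Nv α q t ξ η σ + bias ν N Nv b σ)

/-- Interpolating partition function `Z_N(t) = Ê_σ e^{−βH_{N,t}}` (the prior
`Ê` being the product of `±1` biased Bernoulli averages). -/
def Z (ν N : ℕ) (Nv : Fin ν → ℕ) (α q : Fin ν → ℝ) (β t : ℝ)
    (b : Fin ν → ℝ) (ξ : Weights ν N) (η : Fields ν N) : ℝ :=
  (∑ σ : Config ν N, bw ν N Nv α q β t b ξ η σ) / 2 ^ (ν * N)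

/-- Two-replica Gibbs average `⟨f⟩_t`. -/
def gibbs2 (ν N : ℕ) (Nv : Fin ν → ℕ) (α q : Fin ν → ℝ) (β t : ℝ)
    (b : Fin ν → ℝ) (ξ : Weights ν N) (η : Fields ν N)
    (f : Config ν N → Config ν N → ℝ) : ℝ :=
  (∑ σ : Config ν N, ∑ τ : Config ν N,
      f σ τ * bw ν N Nv α q β t b ξ η σ * bw ν N Nv α q β t b ξ η τ) /
    (∑ σ : Config ν N, bw ν N Nv α q β t b ξ η σ) ^ 2

/-- Layer-`x` overlap `R^{(x)}(σ,τ) = (σ^{(x)},τ^{(x)})/N_x`. -/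
def ovl (ν N : ℕ) (Nv : Fin ν → ℕ) (x : Fin ν)
    (σ τ : Config ν N) : ℝ :=
  (∑ i : Fin N, (if (i : ℕ) < Nv x then sg (σ x i) * sg (τ x i) else 0)) /
    (Nv x : ℝ)

/-- Sum over (unordered) adjacent pairs of layers `Σ_{|x−y|=1}`. -/
def adjSum (ν : ℕ) (F : Fin ν → Fin ν → ℝ) : ℝ :=
  ∑ x : Fin ν, ∑ y : Fin ν, (if (y : ℕ) = (x : ℕ) + 1 then F x y else 0)

/-!
The energies `-β H_N` and `-β H'_N` are linear images `W ξ` and `F η` of standard Gaussian vectors.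
Differentiating `E log Z` along the path `√t W ξ + √(1 - t) F η` and integrating by parts in each
Gaussian coordinate produces half the two-replica Gibbs average of `C(σ, σ) - C(σ, τ)`, where
`C = W Wᵀ - F Fᵀ` is the difference of the two covariances. The variances of the fields are chosen
so that `C(σ, τ)` is, up to a constant, `N β² Σ α_x α_y (R_x - q_x) (R_y - q_y)`: the terms linear
in the overlaps cancel, and the constant becomes `(1 - q_x) (1 - q_y)` because `R_x(σ, σ) = 1`. At
`t = 0` the spins are independent and each contributes a `log cosh`. The sum rule is the fundamental
theorem of calculus on `[0, 1]`.
-/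

open Filter Function Matrix
open scoped Topology Matrix.Norms.Operator

section Gaussian

lemma hasDerivAt_gaussianPDFReal (m : ℝ) (v : NNReal) (x : ℝ) :
    HasDerivAt (gaussianPDFReal m v) (-((x - m) / v) * gaussianPDFReal m v x) x := by
  have hexponent : HasDerivAt (fun x : ℝ => -(x - m) ^ 2 / (2 * v)) (-((x - m) / v)) x := by
    convert! ((((hasDerivAt_id x).sub_const m).fun_pow 2).fun_neg).div_const (2 * (v : ℝ)) using 1
    simp only [id_eq, Nat.cast_ofNat, Nat.add_one_sub_one, pow_one, mul_one]
    rw [← mul_neg, mul_div_mul_left _ _ two_ne_zero, neg_div]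
  rw [gaussianPDFReal_def]
  exact (hexponent.exp.const_mul _).congr_deriv (by ring)

lemma integrable_gaussianReal_iff {m : ℝ} {v : NNReal} (hv : v ≠ 0) {f : ℝ → ℝ} :
    Integrable f (gaussianReal m v) ↔ Integrable (fun x => f x * gaussianPDFReal m v x) := by
  rw [gaussianReal_of_var_ne_zero m hv, integrable_withDensity_iff (measurable_gaussianPDF m v)
    (ae_of_all _ fun _ => gaussianPDF_lt_top)]
  simp only [toReal_gaussianPDF]

-- Integration by parts against the density, whose logarithmic derivative is `-(x - m) / v`.
theorem integral_sub_mul_gaussianReal {m : ℝ} {v : NNReal} {f f' : ℝ → ℝ}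
    (hf : ∀ x, HasDerivAt f (f' x) x) (hf_int : Integrable f (gaussianReal m v))
    (hf'_int : Integrable f' (gaussianReal m v))
    (hxf_int : Integrable (fun x => (x - m) * f x) (gaussianReal m v)) :
    ∫ x, (x - m) * f x ∂gaussianReal m v = v * ∫ x, f' x ∂gaussianReal m v := by
  rcases eq_or_ne v 0 with rfl | hv
  · simp
  have hv' : (v : ℝ) ≠ 0 := by exact_mod_cast hv
  rw [integrable_gaussianReal_iff hv] at hf_int hf'_int hxf_int
  rw [integral_gaussianReal_eq_integral_smul hv, integral_gaussianReal_eq_integral_smul hv]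
  have hparts := integral_mul_deriv_eq_deriv_mul_of_integrable
    (fun x _ => hf x) (fun x _ => hasDerivAt_gaussianPDFReal m v x)
    ((hxf_int.const_mul (-(v : ℝ)⁻¹)).congr
      (ae_of_all _ fun x => by simp only [Pi.mul_apply]; ring))
    hf'_int hf_int
  calc ∫ x, gaussianPDFReal m v x • ((x - m) * f x)
      = ∫ x, -v * (f x * (-((x - m) / v) * gaussianPDFReal m v x)) := by
        congr with x
        rw [smul_eq_mul]
        field_simp
    _ = v * ∫ x, gaussianPDFReal m v x • f' x := by
        rw [integral_const_mul, hparts, neg_mul_neg]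
        simp only [smul_eq_mul, mul_comm]

lemma integrable_id_gaussianReal (m : ℝ) (v : NNReal) :
    Integrable (fun x => x) (gaussianReal m v) :=
  memLp_one_iff_integrable.1 (memLp_id_gaussianReal' 1 ENNReal.one_ne_top)

lemma integral_comp_neg_gaussianReal (v : NNReal) (f : ℝ → ℝ) :
    ∫ x, f (-x) ∂gaussianReal 0 v = ∫ x, f x ∂gaussianReal 0 v := by
  have hneg : MeasurePreserving (MeasurableEquiv.neg ℝ) (gaussianReal 0 v) (gaussianReal 0 v) :=
    ⟨measurable_neg, by simpa using gaussianReal_map_neg (μ := 0) (v := v)⟩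
  exact hneg.integral_comp' f

lemma measurePreserving_update {ι : Type*} [Fintype ι] [DecidableEq ι] {X : ι → Type*}
    [∀ i, MeasurableSpace (X i)] (μ : ∀ i, Measure (X i)) [∀ i, IsProbabilityMeasure (μ i)]
    (i : ι) :
    MeasurePreserving (fun p : (∀ j, X j) × X i => update p.1 i p.2)
      ((Measure.pi μ).prod (μ i)) (Measure.pi μ) := by
  have hmeas : Measurable fun p : (∀ j, X j) × X i => update p.1 i p.2 := measurable_update'
  refine ⟨hmeas, (Measure.pi_eq fun s hs => ?_).symm⟩
  have hpreimage : (fun p : (∀ j, X j) × X i => update p.1 i p.2) ⁻¹' univ.pi s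
      = univ.pi (update s i univ) ×ˢ s i := by
    ext ⟨g, x⟩
    simp only [mem_preimage, mem_univ_pi, mem_prod, forall_update_iff s fun j t => g j ∈ t,
      forall_update_iff g fun j y => y ∈ s j, mem_univ, true_and]
    exact and_comm
  have hrest : ∏ j ∈ Finset.univ.erase i, μ j (update s i univ j)
      = ∏ j ∈ Finset.univ.erase i, μ j (s j) :=
    Finset.prod_congr rfl fun j hj => by rw [update_of_ne (Finset.ne_of_mem_erase hj)]
  rw [Measure.map_apply hmeas (MeasurableSet.univ_pi hs), hpreimage, Measure.prod_prod,
    Measure.pi_pi, ← Finset.prod_erase_mul _ _ (Finset.mem_univ i), hrest, update_self,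
    measure_univ, mul_one, Finset.prod_erase_mul _ _ (Finset.mem_univ i)]

lemma measurePreserving_curry {ι κ X : Type*} [Fintype ι] [Fintype κ] [MeasurableSpace X]
    (μ : Measure X) [IsProbabilityMeasure μ] :
    MeasurePreserving (MeasurableEquiv.curry ι κ X) (Measure.pi fun _ => μ)
      (Measure.pi fun _ => Measure.pi fun _ => μ) :=
  ⟨(MeasurableEquiv.curry ι κ X).measurable, by
    simpa only [Measure.infinitePi_eq_pi] using
      Measure.infinitePi_map_curry (ι := ι) (κ := κ) fun _ _ => μ⟩

/-- The law of a family of i.i.d. standard Gaussian variables indexed by `K`. -/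
abbrev gaussianPi (K : Type*) [Fintype K] : Measure (K → ℝ) :=
  Measure.pi fun _ => gaussianReal 0 1

variable {K L : Type*} [Fintype K] [Fintype L]

lemma integrable_id_gaussianPi : Integrable (fun g : K → ℝ => g) (gaussianPi K) :=
  Integrable.of_eval fun k =>
    integrable_comp_eval (i := k) (f := fun x => x) (integrable_id_gaussianReal 0 1)

-- Resampling the coordinate `k` leaves the law unchanged and reduces to the one-dimensional case.
theorem integral_eval_mul_gaussianPi [DecidableEq K] (k : K) {f f' : (K → ℝ) → ℝ}
    (hf : ∀ g x, HasDerivAt (fun x => f (update g k x)) (f' (update g k x)) x)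
    (hf_int : Integrable f (gaussianPi K)) (hf'_int : Integrable f' (gaussianPi K))
    (hkf_int : Integrable (fun g => g k * f g) (gaussianPi K)) :
    ∫ g, g k * f g ∂gaussianPi K = ∫ g, f' g ∂gaussianPi K := by
  have hup := measurePreserving_update (fun _ : K => gaussianReal 0 1) k
  have hresample {F : (K → ℝ) → ℝ} (hF : Integrable F (gaussianPi K)) :
      ∫ g, F g ∂gaussianPi K
        = ∫ g, ∫ x, F (update g k x) ∂gaussianReal 0 1 ∂gaussianPi K := by
    conv_lhs => rw [gaussianPi, ← hup.map_eq]
    rw [integral_map hup.measurable.aemeasurable (by rw [hup.map_eq]; exact hF.1)]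
    exact integral_prod _ (hup.integrable_comp_of_integrable hF)
  have hslice {F : (K → ℝ) → ℝ} (hF : Integrable F (gaussianPi K)) :
      ∀ᵐ g ∂gaussianPi K, Integrable (fun x => F (update g k x)) (gaussianReal 0 1) :=
    (hup.integrable_comp_of_integrable hF).prod_right_ae
  rw [hresample hkf_int, hresample hf'_int]
  refine integral_congr_ae ?_
  filter_upwards [hslice hf_int, hslice hf'_int, hslice hkf_int] with g hg hg' hkg
  simpa using integral_sub_mul_gaussianReal (hf g) hg hg' (by simpa using hkg)

lemma integral_gaussianPi_sum {F : (K ⊕ L → ℝ) → ℝ} (hF : Integrable F (gaussianPi (K ⊕ L))) :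
    ∫ g, F g ∂gaussianPi (K ⊕ L)
      = ∫ ξ, ∫ η, F (Sum.elim ξ η) ∂gaussianPi L ∂gaussianPi K := by
  have hsum := measurePreserving_sumPiEquivProdPi_symm fun _ : K ⊕ L => gaussianReal 0 1
  have helim (p : (K → ℝ) × (L → ℝ)) :
      (MeasurableEquiv.sumPiEquivProdPi fun _ : K ⊕ L => ℝ).symm p = Sum.elim p.1 p.2 := by
    ext (k | l) <;> rfl
  rw [← hsum.integral_comp' F]
  simp only [helim]
  exact integral_prod _ ((hsum.integrable_comp_of_integrable hF).congr
    (ae_of_all _ fun p => congrArg F (helim p)))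

end Gaussian

section Gibbs

variable {S : Type*}

/-- The energy of two independent replicas, whose Gibbs average is the two-replica average. -/
def pairEnergy (e : S → ℝ) (p : S × S) : ℝ := e p.1 + e p.2

lemma continuous_pairEnergy : Continuous (pairEnergy : (S → ℝ) → S × S → ℝ) := by
  unfold pairEnergy
  fun_prop

variable [Fintype S]

/-- The logarithm of the partition function with Gibbs weights `exp (e σ)`: the sign and the inverse
temperature are absorbed into the energy `e`. -/
def logPartition (e : S → ℝ) : ℝ := log (∑ σ, exp (e σ))

/-- The Gibbs average with weights proportional to `exp (e σ)`, as a linear functional of the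
observable. -/
def gibbsMean (e : S → ℝ) : (S → ℝ) →ₗ[ℝ] ℝ :=
  (∑ σ, exp (e σ))⁻¹ • ∑ σ, exp (e σ) • LinearMap.proj σ

lemma sum_exp_pos [Nonempty S] (e : S → ℝ) : 0 < ∑ σ, exp (e σ) :=
  Finset.sum_pos (fun σ _ => exp_pos (e σ)) Finset.univ_nonempty

lemma gibbsMean_apply (e f : S → ℝ) :
    gibbsMean e f = (∑ σ, exp (e σ) * f σ) / ∑ σ, exp (e σ) := by
  simp only [gibbsMean, LinearMap.smul_apply, LinearMap.sum_apply, LinearMap.proj_apply,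
    smul_eq_mul]
  exact inv_mul_eq_div _ _

lemma gibbsMean_one [Nonempty S] (e : S → ℝ) : gibbsMean e 1 = 1 := by
  simp only [gibbsMean_apply, Pi.one_apply, mul_one, div_self (sum_exp_pos e).ne']

lemma abs_gibbsMean_le (e f : S → ℝ) : |gibbsMean e f| ≤ ‖f‖ := by
  rw [gibbsMean_apply, abs_div, abs_of_nonneg (Finset.sum_nonneg fun σ _ => (exp_pos (e σ)).le)]
  refine div_le_of_le_mul₀ (Finset.sum_nonneg fun σ _ => (exp_pos _).le) (norm_nonneg f) ?_
  rw [Finset.mul_sum]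
  refine (Finset.abs_sum_le_sum_abs _ _).trans (Finset.sum_le_sum fun σ _ => ?_)
  rw [abs_mul, abs_exp, mul_comm]
  gcongr
  exact norm_le_pi_norm f σ

lemma continuous_gibbsMean [Nonempty S] :
    Continuous fun p : (S → ℝ) × (S → ℝ) => gibbsMean p.1 p.2 := by
  simp only [gibbsMean_apply]
  exact Continuous.div (by fun_prop) (by fun_prop) fun p => (sum_exp_pos p.1).ne'

lemma gibbsMean_pairEnergy_mul (e f g : S → ℝ) :
    gibbsMean (pairEnergy e) (fun p => f p.1 * g p.2) = gibbsMean e f * gibbsMean e g := by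
  simp only [gibbsMean_apply, pairEnergy, exp_add, mul_mul_mul_comm,
    Fintype.sum_prod_type, ← Finset.sum_mul_sum, div_mul_div_comm]

lemma gibbsMean_pairEnergy_fst [Nonempty S] (e f : S → ℝ) :
    gibbsMean (pairEnergy e) (fun p => f p.1) = gibbsMean e f := by
  simpa [gibbsMean_one] using gibbsMean_pairEnergy_mul e f 1

lemma lipschitzWith_logPartition [Nonempty S] :
    LipschitzWith 1 (logPartition : (S → ℝ) → ℝ) := by
  refine LipschitzWith.of_le_add fun e e' => ?_
  have hexp (σ : S) : exp (e σ) ≤ exp (e' σ) * exp (dist e e') := by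
    rw [← exp_add, exp_le_exp]
    linarith [le_abs_self (e σ - e' σ), Real.dist_eq (e σ) (e' σ), dist_le_pi_dist e e' σ]
  calc logPartition e ≤ log ((∑ σ, exp (e' σ)) * exp (dist e e')) := by
        rw [Finset.sum_mul]
        exact log_le_log (sum_exp_pos e) (Finset.sum_le_sum fun σ _ => hexp σ)
    _ = logPartition e' + dist e e' := by
        rw [log_mul (sum_exp_pos e').ne' (exp_pos _).ne', log_exp, logPartition]

lemma logPartition_sum_eval {ι : Type*} [Fintype ι] [DecidableEq ι] [Nonempty S] (e : ι → S → ℝ) :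
    logPartition (fun σ : ι → S => ∑ i, e i (σ i)) = ∑ i, logPartition (e i) := by
  simp only [logPartition, exp_sum, ← Fintype.prod_sum fun i s => exp (e i s)]
  exact log_prod fun i _ => (sum_exp_pos (e i)).ne'

lemma hasDerivAt_sum_exp_mul {e : ℝ → S → ℝ} {e' : S → ℝ} {x : ℝ} (he : HasDerivAt e e' x)
    (f : S → ℝ) :
    HasDerivAt (fun x => ∑ σ, exp (e x σ) * f σ) (∑ σ, exp (e x σ) * (f σ * e' σ)) x :=
  (HasDerivAt.fun_sum fun σ _ => (hasDerivAt_pi.1 he σ).exp.mul_const (f σ)).congr_deriv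
    (Finset.sum_congr rfl fun _ _ => by ring)

lemma hasDerivAt_sum_exp {e : ℝ → S → ℝ} {e' : S → ℝ} {x : ℝ} (he : HasDerivAt e e' x) :
    HasDerivAt (fun x => ∑ σ, exp (e x σ)) (∑ σ, exp (e x σ) * e' σ) x := by
  simpa using hasDerivAt_sum_exp_mul he 1

lemma hasDerivAt_logPartition [Nonempty S] {e : ℝ → S → ℝ} {e' : S → ℝ} {x : ℝ}
    (he : HasDerivAt e e' x) :
    HasDerivAt (fun x => logPartition (e x)) (gibbsMean (e x) e') x := by
  rw [gibbsMean_apply]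
  exact (hasDerivAt_sum_exp he).log (sum_exp_pos (e x)).ne'

lemma hasDerivAt_gibbsMean [Nonempty S] {e : ℝ → S → ℝ} {e' : S → ℝ} {x : ℝ}
    (he : HasDerivAt e e' x) (f : S → ℝ) :
    HasDerivAt (fun x => gibbsMean (e x) f)
      (gibbsMean (pairEnergy (e x)) fun p => f p.1 * (e' p.1 - e' p.2)) x := by
  have hcov : (gibbsMean (pairEnergy (e x)) fun p => f p.1 * (e' p.1 - e' p.2))
      = gibbsMean (e x) (f * e') - gibbsMean (e x) f * gibbsMean (e x) e' := by
    rw [← gibbsMean_pairEnergy_mul, ← gibbsMean_pairEnergy_fst (e x) (f * e'), ← map_sub]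
    congr 1 with p
    exact mul_sub _ _ _
  rw [hcov]
  simp only [gibbsMean_apply]
  refine ((hasDerivAt_sum_exp_mul he f).div (hasDerivAt_sum_exp he)
    (sum_exp_pos (e x)).ne').congr_deriv ?_
  have hpos := (sum_exp_pos (e x)).ne'
  simp only [Pi.mul_apply]
  field_simp

end Gibbs

section GaussianEnergy

variable {S K : Type*} [Fintype S] [Fintype K]

lemma integrable_mulVec (A : Matrix S K ℝ) : Integrable (fun g => A *ᵥ g) (gaussianPi K) :=
  A.mulVecLin.toContinuousLinearMap.integrable_comp integrable_id_gaussianPi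

lemma integrable_mulVec_add (A : Matrix S K ℝ) (h : S → ℝ) :
    Integrable (fun g => A *ᵥ g + h) (gaussianPi K) :=
  (integrable_mulVec A).add (integrable_const h)

variable [Nonempty S]

lemma integrable_logPartition {Ω : Type*} [MeasurableSpace Ω] {μ : Measure Ω} [IsFiniteMeasure μ]
    {e : Ω → S → ℝ} (he : Integrable e μ) : Integrable (fun ω => logPartition (e ω)) μ := by
  refine (he.norm.add (integrable_const |logPartition (0 : S → ℝ)|)).mono'
    (lipschitzWith_logPartition.continuous.comp_aestronglyMeasurable he.1) (ae_of_all _ fun ω => ?_)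
  have hdist := lipschitzWith_logPartition.dist_le_mul (e ω) 0
  rw [NNReal.coe_one, one_mul, dist_zero_right, Real.dist_eq] at hdist
  have htri := abs_sub_abs_le_abs_sub (logPartition (e ω)) (logPartition (0 : S → ℝ))
  rw [Real.norm_eq_abs, Pi.add_apply]
  linarith

lemma integrable_gibbsMean {Ω : Type*} [MeasurableSpace Ω] {μ : Measure Ω} {e f : Ω → S → ℝ}
    (he : AEStronglyMeasurable e μ) (hf : Integrable f μ) :
    Integrable (fun ω => gibbsMean (e ω) (f ω)) μ := by
  have hmeas : AEStronglyMeasurable (fun ω => gibbsMean (e ω) (f ω)) μ :=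
    Continuous.comp_aestronglyMeasurable₂ (g := fun e f => gibbsMean e f)
      continuous_gibbsMean he hf.1
  exact hf.norm.mono' hmeas (ae_of_all _ fun ω => abs_gibbsMean_le (e ω) (f ω))

lemma integrable_gibbsMean_pairEnergy (A : Matrix S K ℝ) (h : S → ℝ) (f : S × S → ℝ) :
    Integrable (fun g => gibbsMean (pairEnergy (A *ᵥ g + h)) f) (gaussianPi K) :=
  integrable_gibbsMean
    (continuous_pairEnergy.comp_aestronglyMeasurable (integrable_mulVec_add A h).1)
    (integrable_const f)

lemma continuous_integral_logPartition (h : S → ℝ) :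
    Continuous fun A : Matrix S K ℝ => ∫ g, logPartition (A *ᵥ g + h) ∂gaussianPi K := by
  refine LipschitzWith.continuous (K := (∫ g, ‖g‖ ∂gaussianPi K).toNNReal)
    (LipschitzWith.of_dist_le' fun A B => ?_)
  have hint (A : Matrix S K ℝ) := integrable_logPartition (integrable_mulVec_add A h)
  have hpointwise (g : K → ℝ) :
      ‖logPartition (A *ᵥ g + h) - logPartition (B *ᵥ g + h)‖ ≤ dist A B * ‖g‖ := by
    have hdist := lipschitzWith_logPartition.dist_le_mul (A *ᵥ g + h) (B *ᵥ g + h)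
    rw [NNReal.coe_one, one_mul, dist_add_right, dist_eq_norm, dist_eq_norm, ← sub_mulVec] at hdist
    exact hdist.trans (dist_eq_norm A B ▸ linfty_opNorm_mulVec (A - B) g)
  rw [dist_eq_norm, ← integral_sub (hint A) (hint B), mul_comm, ← integral_const_mul]
  exact norm_integral_le_of_norm_le (integrable_id_gaussianPi.norm.const_mul _)
    (ae_of_all _ hpointwise)

lemma continuous_integral_gibbsMean_pairEnergy (h : S → ℝ) (f : S × S → ℝ) :
    Continuous fun A : Matrix S K ℝ =>
      ∫ g, gibbsMean (pairEnergy (A *ᵥ g + h)) f ∂gaussianPi K := by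
  have : FirstCountableTopology (Matrix S K ℝ) :=
    inferInstanceAs (FirstCountableTopology (S → K → ℝ))
  refine continuous_of_dominated (fun A => (integrable_gibbsMean_pairEnergy A h f).1)
    (fun A => ae_of_all _ fun _ => abs_gibbsMean_le _ f) (integrable_const ‖f‖)
    (ae_of_all _ fun g => ?_)
  have henergy : Continuous fun A : Matrix S K ℝ => pairEnergy (A *ᵥ g + h) :=
    continuous_pairEnergy.comp (by fun_prop)
  exact continuous_gibbsMean.comp (henergy.prodMk continuous_const)

lemma hasDerivAt_integral_logPartition {A A' : ℝ → Matrix S K ℝ} {t : ℝ} (h : S → ℝ)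
    (hA : ∀ᶠ s in 𝓝 t, HasDerivAt A (A' s) s) (hA' : ContinuousAt A' t) :
    HasDerivAt (fun s => ∫ g, logPartition (A s *ᵥ g + h) ∂gaussianPi K)
      (∫ g, gibbsMean (A t *ᵥ g + h) (A' t *ᵥ g) ∂gaussianPi K) t := by
  have hbound : ∀ᶠ s in 𝓝 t, ‖A' s‖ ≤ ‖A' t‖ + 1 :=
    hA'.norm.eventually_le_const (lt_add_one _)
  have henergy {s : ℝ} (hs : HasDerivAt A (A' s) s) (g : K → ℝ) :
      HasDerivAt (fun s => A s *ᵥ g + h) (A' s *ᵥ g) s := by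
    classical
    exact ((LinearMap.applyₗ g ∘ₗ
      toLin'.toLinearMap).toContinuousLinearMap.hasFDerivAt.comp_hasDerivAt s hs).add_const h
  refine (hasDerivAt_integral_of_dominated_loc_of_deriv_le (hA.and hbound)
    (Eventually.of_forall fun s => (integrable_logPartition (integrable_mulVec_add (A s) h)).1)
    (integrable_logPartition (integrable_mulVec_add (A t) h))
    (integrable_gibbsMean (integrable_mulVec_add (A t) h).1 (integrable_mulVec (A' t))).1
    (ae_of_all _ fun g s hs => ?_) (integrable_id_gaussianPi.norm.const_mul (‖A' t‖ + 1))
    (ae_of_all _ fun g s hs => hasDerivAt_logPartition (henergy hs.1 g))).2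
  refine (abs_gibbsMean_le _ _).trans ((linfty_opNorm_mulVec (A' s) g).trans ?_)
  gcongr
  exact hs.2

lemma integrable_eval_mul_gibbsMean (A : Matrix S K ℝ) (h f : S → ℝ) (k : K) :
    Integrable (fun g => g k * gibbsMean (A *ᵥ g + h) f) (gaussianPi K) := by
  simp only [← smul_eq_mul, ← map_smul]
  exact integrable_gibbsMean (integrable_mulVec_add A h).1
    ((integrable_id_gaussianPi.eval k).smul_const f)

lemma integral_eval_mul_gibbsMean (A : Matrix S K ℝ) (h f : S → ℝ) (k : K) :
    ∫ g, g k * gibbsMean (A *ᵥ g + h) f ∂gaussianPi K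
      = ∫ g, gibbsMean (pairEnergy (A *ᵥ g + h)) (fun p => f p.1 * (A p.1 k - A p.2 k))
          ∂gaussianPi K := by
  classical
  have henergy (g : K → ℝ) (x : ℝ) :
      HasDerivAt (fun x => A *ᵥ update g k x + h) (A.col k) x := by
    simpa using (A.mulVecLin.toContinuousLinearMap.hasFDerivAt.comp_hasDerivAt x
      (hasDerivAt_update g k x)).add_const h
  exact integral_eval_mul_gaussianPi k (fun g x => hasDerivAt_gibbsMean (henergy g x) f)
    (integrable_gibbsMean (integrable_mulVec_add A h).1 (integrable_const f))
    (integrable_gibbsMean_pairEnergy A h _) (integrable_eval_mul_gibbsMean A h f k)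

theorem integral_gibbsMean_mulVec (A B : Matrix S K ℝ) (h : S → ℝ) :
    ∫ g, gibbsMean (A *ᵥ g + h) (B *ᵥ g) ∂gaussianPi K
      = ∫ g, gibbsMean (pairEnergy (A *ᵥ g + h))
          (fun p => (B * Aᵀ) p.1 p.1 - (B * Aᵀ) p.1 p.2) ∂gaussianPi K := by
  have hcols (g : K → ℝ) : B *ᵥ g = ∑ k, g k • B.col k := by
    simp only [mulVec_eq_sum, op_smul_eq_smul, col_def]
  have hcov : (fun p : S × S => (B * Aᵀ) p.1 p.1 - (B * Aᵀ) p.1 p.2)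
      = ∑ k, fun p : S × S => B.col k p.1 * (A p.1 k - A p.2 k) := by
    ext p
    simp only [mul_apply, transpose_apply, col_apply, Finset.sum_apply, ← Finset.sum_sub_distrib,
      mul_sub]
  simp only [hcols, hcov, map_sum, map_smul, smul_eq_mul]
  rw [integral_finsetSum _ fun k _ => integrable_eval_mul_gibbsMean A h _ k,
    integral_finsetSum _ fun k _ => integrable_gibbsMean_pairEnergy A h _]
  exact Finset.sum_congr rfl fun k _ => integral_eval_mul_gibbsMean A h _ k

end GaussianEnergy

section Interpolation

variable {S K L : Type*}

/-- The energy `√t W ξ + √(1 - t) F η` interpolating between `F η` and `W ξ`, as a matrix acting on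
the joint Gaussian vector `(ξ, η)` indexed by `K ⊕ L`. -/
def interpolationPath (W : Matrix S K ℝ) (F : Matrix S L ℝ) (t : ℝ) : Matrix S (K ⊕ L) ℝ :=
  fromCols (√t • W) (√(1 - t) • F)

/-- The derivative of `interpolationPath W F` at `t ∈ (0, 1)`. -/
def interpolationPathDeriv (W : Matrix S K ℝ) (F : Matrix S L ℝ) (t : ℝ) : Matrix S (K ⊕ L) ℝ :=
  fromCols ((1 / (2 * √t)) • W) ((-1 / (2 * √(1 - t))) • F)

variable (W : Matrix S K ℝ) (F : Matrix S L ℝ)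

lemma fromCols_smul_smul (a b : ℝ) :
    fromCols (a • W) (b • F) = a • fromCols W 0 + b • fromCols 0 F := by
  ext σ (k | l) <;> simp

lemma continuous_interpolationPath : Continuous (interpolationPath W F) := by
  unfold interpolationPath
  simp only [fromCols_smul_smul]
  fun_prop

lemma continuousAt_interpolationPathDeriv {t : ℝ} (ht : t ∈ Ioo 0 1) :
    ContinuousAt (interpolationPathDeriv W F) t := by
  have ht₀ : 2 * √t ≠ 0 := by simpa using (sqrt_pos.2 ht.1).ne'
  have ht₁ : 2 * √(1 - t) ≠ 0 := by simpa using (sqrt_pos.2 (sub_pos.2 ht.2)).ne'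
  unfold interpolationPathDeriv
  simp only [fromCols_smul_smul]
  fun_prop (disch := assumption)

variable [Fintype K] [Fintype L]

/-- The covariance of the Gaussian energy `W ξ` minus that of the Gaussian energy `F η`. -/
def covarianceGap : Matrix S S ℝ := W * Wᵀ - F * Fᵀ

lemma covarianceGap_apply (σ τ : S) :
    covarianceGap W F σ τ = ∑ k, W σ k * W τ k - ∑ l, F σ l * F τ l := by
  simp only [covarianceGap, Matrix.sub_apply, mul_apply, transpose_apply]

lemma interpolationPath_mulVec_sumElim (t : ℝ) (ξ : K → ℝ) (η : L → ℝ) :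
    interpolationPath W F t *ᵥ Sum.elim ξ η = √t • W *ᵥ ξ + √(1 - t) • F *ᵥ η := by
  simp only [interpolationPath, fromCols_mulVec_sumElim, smul_mulVec]

lemma interpolationPathDeriv_mul_transpose {t : ℝ} (ht : t ∈ Ioo 0 1) :
    interpolationPathDeriv W F t * (interpolationPath W F t)ᵀ
      = (1 / 2 : ℝ) • covarianceGap W F := by
  have ht₀ : √t ≠ 0 := (sqrt_pos.2 ht.1).ne'
  have ht₁ : √(1 - t) ≠ 0 := (sqrt_pos.2 (sub_pos.2 ht.2)).ne'
  simp only [interpolationPathDeriv, interpolationPath, transpose_fromCols,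
    fromCols_mul_fromRows, transpose_smul, smul_mul, Matrix.mul_smul, smul_smul]
  rw [covarianceGap, smul_sub, sub_eq_add_neg (_ • _), ← neg_smul]
  congr 2 <;> field_simp

variable [Fintype S]

lemma hasDerivAt_interpolationPath {t : ℝ} (ht : t ∈ Ioo 0 1) :
    HasDerivAt (interpolationPath W F) (interpolationPathDeriv W F t) t := by
  have hsqrt : HasDerivAt (fun t => √t) (1 / (2 * √t)) t := (hasDerivAt_id t).sqrt ht.1.ne'
  have hsqrt_sub : HasDerivAt (fun t => √(1 - t)) (-1 / (2 * √(1 - t))) t :=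
    ((hasDerivAt_id t).const_sub 1).sqrt (sub_pos.2 ht.2).ne'
  unfold interpolationPath interpolationPathDeriv
  simp only [fromCols_smul_smul]
  exact (hsqrt.smul_const (fromCols W 0)).add (hsqrt_sub.smul_const (fromCols 0 F))

variable [Nonempty S] (h : S → ℝ)

lemma integral_logPartition_interpolationPath_zero :
    ∫ g, logPartition (interpolationPath W F 0 *ᵥ g + h) ∂gaussianPi (K ⊕ L)
      = ∫ η, logPartition (F *ᵥ η + h) ∂gaussianPi L := by
  rw [integral_gaussianPi_sum (integrable_logPartition (integrable_mulVec_add _ h))]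
  simp [interpolationPath_mulVec_sumElim]

lemma integral_logPartition_interpolationPath_one :
    ∫ g, logPartition (interpolationPath W F 1 *ᵥ g + h) ∂gaussianPi (K ⊕ L)
      = ∫ ξ, logPartition (W *ᵥ ξ + h) ∂gaussianPi K := by
  rw [integral_gaussianPi_sum (integrable_logPartition (integrable_mulVec_add _ h))]
  simp [interpolationPath_mulVec_sumElim]

lemma continuous_integral_gibbsMean_interpolationPath (f : S × S → ℝ) :
    Continuous fun t => ∫ g, gibbsMean (pairEnergy (interpolationPath W F t *ᵥ g + h)) f
      ∂gaussianPi (K ⊕ L) :=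
  (continuous_integral_gibbsMean_pairEnergy h f).comp (continuous_interpolationPath W F)

/-- The two-replica Gibbs average at time `t` of the interpolation, averaged over the disorder and
over `t ∈ [0, 1]`, as a linear functional of the observable. -/
def interpolatedMean : (S × S → ℝ) →ₗ[ℝ] ℝ where
  toFun f := ∫ t in (0 : ℝ)..1, ∫ g,
    gibbsMean (pairEnergy (interpolationPath W F t *ᵥ g + h)) f ∂gaussianPi (K ⊕ L)
  map_add' f₁ f₂ := by
    rw [← intervalIntegral.integral_add
      ((continuous_integral_gibbsMean_interpolationPath W F h f₁).intervalIntegrable _ _)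
      ((continuous_integral_gibbsMean_interpolationPath W F h f₂).intervalIntegrable _ _)]
    congr 1 with t
    rw [← integral_add (integrable_gibbsMean_pairEnergy _ h f₁)
      (integrable_gibbsMean_pairEnergy _ h f₂)]
    simp only [map_add]
  map_smul' c f := by
    simp only [map_smul, integral_smul, intervalIntegral.integral_smul, RingHom.id_apply]

lemma interpolatedMean_apply (f : S × S → ℝ) :
    interpolatedMean W F h f = ∫ t in (0 : ℝ)..1, ∫ ξ, ∫ η,
      gibbsMean (pairEnergy (√t • W *ᵥ ξ + √(1 - t) • F *ᵥ η + h)) f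
        ∂gaussianPi L ∂gaussianPi K := by
  simp only [interpolatedMean, LinearMap.coe_mk, AddHom.coe_mk, integral_gaussianPi_sum
    (integrable_gibbsMean_pairEnergy _ h f), interpolationPath_mulVec_sumElim]

lemma interpolatedMean_const_mul (c : ℝ) (f : S × S → ℝ) :
    interpolatedMean W F h (fun p => c * f p) = c * interpolatedMean W F h f :=
  map_smul (interpolatedMean W F h) c f

lemma interpolatedMean_one : interpolatedMean W F h 1 = 1 := by
  simp [interpolatedMean, gibbsMean_one]

lemma hasDerivAt_integral_logPartition_interpolationPath {t : ℝ} (ht : t ∈ Ioo 0 1) :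
    HasDerivAt
      (fun t => ∫ g, logPartition (interpolationPath W F t *ᵥ g + h) ∂gaussianPi (K ⊕ L))
      (∫ g, gibbsMean (pairEnergy (interpolationPath W F t *ᵥ g + h))
        ((1 / 2 : ℝ) • fun p => covarianceGap W F p.1 p.1 - covarianceGap W F p.1 p.2)
        ∂gaussianPi (K ⊕ L)) t := by
  have hderiv := hasDerivAt_integral_logPartition h
    ((isOpen_Ioo.eventually_mem ht).mono fun s hs => hasDerivAt_interpolationPath W F hs)
    (continuousAt_interpolationPathDeriv W F ht)
  rw [integral_gibbsMean_mulVec, interpolationPathDeriv_mul_transpose W F ht] at hderiv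
  convert hderiv using 4 with g
  ext p
  simp only [Pi.smul_apply, Matrix.smul_apply, smul_eq_mul, mul_sub]

theorem integral_logPartition_sub_eq_interpolatedMean :
    ∫ ξ, logPartition (W *ᵥ ξ + h) ∂gaussianPi K - ∫ η, logPartition (F *ᵥ η + h) ∂gaussianPi L
      = 1 / 2 * interpolatedMean W F h
          fun p => covarianceGap W F p.1 p.1 - covarianceGap W F p.1 p.2 := by
  have hcont := (continuous_integral_logPartition h).comp (continuous_interpolationPath W F)
  have hftc := intervalIntegral.integral_eq_sub_of_hasDerivAt_of_le zero_le_one hcont.continuousOn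
    (fun t ht => hasDerivAt_integral_logPartition_interpolationPath W F h ht)
    ((continuous_integral_gibbsMean_interpolationPath W F h _).intervalIntegrable _ _)
  rw [← integral_logPartition_interpolationPath_zero W F h,
    ← integral_logPartition_interpolationPath_one W F h, ← smul_eq_mul, ← map_smul]
  exact hftc.symm

end Interpolation

section Layers

variable {ν : ℕ}

lemma sum_ite_val_eq_succ (x : Fin ν) (f : Fin ν → ℝ) :
    ∑ y : Fin ν, (if (y : ℕ) = (x : ℕ) + 1 then f y else 0)
      = if h : (x : ℕ) + 1 < ν then f ⟨x + 1, h⟩ else 0 := by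
  split_ifs with h
  · have hnext (y : Fin ν) : (y : ℕ) = x + 1 ↔ y = ⟨x + 1, h⟩ := by rw [Fin.ext_iff]
    simp only [hnext, Finset.sum_ite_eq', Finset.mem_univ, if_true]
  · exact Finset.sum_eq_zero fun y _ => if_neg fun hy => h (by omega)

lemma sum_fin_ite_val_lt {N n : ℕ} (hn : n ≤ N) (c : ℝ) :
    ∑ i : Fin N, (if (i : ℕ) < n then c else 0) = n * c := by
  rw [← Finset.sum_filter, Finset.sum_const, Fin.card_filter_val_lt, min_eq_right hn, nsmul_eq_mul]

lemma adjSum_eq_sum (F : Fin ν → Fin ν → ℝ) :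
    adjSum ν F = ∑ p : Fin ν × Fin ν with (p.2 : ℕ) = p.1 + 1, F p.1 p.2 := by
  rw [adjSum, Finset.sum_filter, Fintype.sum_prod_type]

lemma sum_Qv_mul (α q r : Fin ν → ℝ) :
    ∑ x, Qv ν α q x * r x = adjSum ν fun x y => α y * q y * r x + α x * q x * r y := by
  have hsplit (x y : Fin ν) :
      (if (y : ℕ) = x + 1 ∨ (y : ℕ) + 1 = x then α y * q y else 0) * r x
        = (if (y : ℕ) = x + 1 then α y * q y * r x else 0)
          + (if (x : ℕ) = y + 1 then α y * q y * r x else 0) := by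
    split_ifs <;> first | omega | simp
  have hright (x y : Fin ν) : (if (y : ℕ) = x + 1 then α y * q y * r x + α x * q x * r y else 0)
      = (if (y : ℕ) = x + 1 then α y * q y * r x else 0)
          + (if (y : ℕ) = x + 1 then α x * q x * r y else 0) := by
    split_ifs <;> simp
  simp only [Qv, adjSum, Finset.sum_mul, hsplit, hright, Finset.sum_add_distrib]
  congr 1
  exact Finset.sum_comm

end Layers

section Energies

variable {ν N : ℕ} (Nv : Fin ν → ℕ)

/-- The spin at site `i` of layer `x`, set to zero at the padding sites `i ≥ Nv x`. -/
def activeSpin (σ : Config ν N) (x : Fin ν) (i : Fin N) : ℝ :=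
  if (i : ℕ) < Nv x then sg (σ x i) else 0

/-- The spin at site `j` of the layer following `x`, set to zero if `x` is the last layer. -/
def nextSpin (σ : Config ν N) (x : Fin ν) (j : Fin N) : ℝ :=
  if h : (x : ℕ) + 1 < ν then activeSpin Nv σ ⟨x + 1, h⟩ j else 0

/-- The matrix taking the weights `ξ`, as a vector, to the energy `-β H_N`. -/
def couplingMatrix (β : ℝ) : Matrix (Config ν N) (Fin ν × Fin N × Fin N) ℝ :=
  of fun σ k => β / √N * (activeSpin Nv σ k.1 k.2.1 * nextSpin Nv σ k.1 k.2.2)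

/-- The matrix taking the fields `η`, as a vector, to the energy `-β H'_N`. -/
def fieldMatrix (α q : Fin ν → ℝ) (β : ℝ) : Matrix (Config ν N) (Fin ν × Fin N) ℝ :=
  of fun σ k => -(β * √(Qv ν α q k.1)) * activeSpin Nv σ k.1 k.2

lemma ham_eq_sum (ξ : Weights ν N) (σ : Config ν N) :
    ham ν N Nv ξ σ
      = -∑ x, ∑ i, ∑ j, ξ x i j / √N * (activeSpin Nv σ x i * nextSpin Nv σ x j) := by
  have hpair (x y : Fin ν) (i j : Fin N) :
      (if (i : ℕ) < Nv x ∧ (j : ℕ) < Nv y then ξ x i j / √N * sg (σ x i) * sg (σ y j) else 0)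
        = ξ x i j / √N * (activeSpin Nv σ x i * activeSpin Nv σ y j) := by
    simp only [activeSpin, mul_ite, ite_mul, mul_zero, zero_mul, ite_and, mul_assoc]
    split_ifs <;> rfl
  rw [ham]
  congr! 2 with x
  simp only [hpair]
  rw [sum_ite_val_eq_succ x fun y => ∑ i, ∑ j, ξ x i j / √N *
    (activeSpin Nv σ x i * activeSpin Nv σ y j)]
  unfold nextSpin
  split_ifs <;> simp

lemma couplingMatrix_mulVec (β : ℝ) (ξ : Fin ν × Fin N × Fin N → ℝ) (σ : Config ν N) :
    (couplingMatrix Nv β *ᵥ ξ) σ = -β * ham ν N Nv (fun x i j => ξ (x, i, j)) σ := by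
  simp only [ham_eq_sum, neg_mul_neg, mulVec, dotProduct, couplingMatrix, of_apply,
    Fintype.sum_prod_type, Finset.mul_sum]
  congr! 3
  ring

lemma fieldMatrix_mulVec (α q : Fin ν → ℝ) (β : ℝ) (η : Fin ν × Fin N → ℝ) (σ : Config ν N) :
    (fieldMatrix Nv α q β *ᵥ η) σ = -β * ham' ν N Nv α q (fun x i => η (x, i)) σ := by
  simp only [ham', mulVec, dotProduct, fieldMatrix, activeSpin, of_apply, Fintype.sum_prod_type,
    Finset.mul_sum, mul_ite, ite_mul, mul_zero, zero_mul]
  congr! 3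
  ring

lemma bw_eq_exp (α q : Fin ν → ℝ) (β t : ℝ) (b : Fin ν → ℝ) (ξ : Fin ν × Fin N × Fin N → ℝ)
    (η : Fin ν × Fin N → ℝ) (σ : Config ν N) :
    bw ν N Nv α q β t b (fun x i j => ξ (x, i, j)) (fun x i => η (x, i)) σ
      = exp ((√t • couplingMatrix Nv β *ᵥ ξ + √(1 - t) • fieldMatrix Nv α q β *ᵥ η
          + bias ν N Nv b) σ) := by
  simp only [bw, hamT, Pi.add_apply, Pi.smul_apply, couplingMatrix_mulVec, fieldMatrix_mulVec,
    smul_eq_mul]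
  congr 2
  ring

lemma gibbs2_eq_gibbsMean (α q : Fin ν → ℝ) (β t : ℝ) (b : Fin ν → ℝ)
    (ξ : Fin ν × Fin N × Fin N → ℝ) (η : Fin ν × Fin N → ℝ) (f : Config ν N → Config ν N → ℝ) :
    gibbs2 ν N Nv α q β t b (fun x i j => ξ (x, i, j)) (fun x i => η (x, i)) f
      = gibbsMean (pairEnergy (√t • couplingMatrix Nv β *ᵥ ξ
          + √(1 - t) • fieldMatrix Nv α q β *ᵥ η + bias ν N Nv b)) fun p => f p.1 p.2 := by
  simp only [gibbs2, bw_eq_exp, gibbsMean_apply, pairEnergy, exp_add, Fintype.sum_prod_type,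
    sq, Finset.sum_mul_sum]
  congr! 3
  ring

lemma integral_μW (f : Weights ν N → ℝ) :
    ∫ ξ, f ξ ∂μW ν N
      = ∫ ξ, f (fun x i j => ξ (x, i, j)) ∂gaussianPi (Fin ν × Fin N × Fin N) := by
  have hcurry : MeasurePreserving ((MeasurableEquiv.curry (Fin ν) (Fin N × Fin N) ℝ).trans
      (MeasurableEquiv.piCongrRight fun _ => MeasurableEquiv.curry (Fin N) (Fin N) ℝ))
      (gaussianPi (Fin ν × Fin N × Fin N)) (μW ν N) :=
    (measurePreserving_curry _).trans (measurePreserving_pi _ _ fun _ => measurePreserving_curry _)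
  exact (hcurry.integral_comp' f).symm

lemma integral_μF (f : Fields ν N → ℝ) :
    ∫ η, f η ∂μF ν N = ∫ η, f (fun x i => η (x, i)) ∂gaussianPi (Fin ν × Fin N) :=
  ((measurePreserving_curry (ι := Fin ν) (κ := Fin N) (gaussianReal 0 1)).integral_comp' f).symm

lemma integral_gibbs2_eq_interpolatedMean (α q : Fin ν → ℝ) (β : ℝ) (b : Fin ν → ℝ)
    (f : Config ν N → Config ν N → ℝ) :
    ∫ t in (0 : ℝ)..1, ∫ ξ, ∫ η, gibbs2 ν N Nv α q β t b ξ η f ∂μF ν N ∂μW ν N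
      = interpolatedMean (couplingMatrix Nv β) (fieldMatrix Nv α q β) (bias ν N Nv b)
          fun p => f p.1 p.2 := by
  simp only [integral_μW, integral_μF, gibbs2_eq_gibbsMean, interpolatedMean_apply]

lemma log_Z_one (α q : Fin ν → ℝ) (β : ℝ) (b : Fin ν → ℝ) (ξ : Fin ν × Fin N × Fin N → ℝ) :
    log (Z ν N Nv α q β 1 b (fun x i j => ξ (x, i, j)) 0)
      = logPartition (couplingMatrix Nv β *ᵥ ξ + bias ν N Nv b) - ν * N * log 2 := by
  have hbw (σ : Config ν N) : bw ν N Nv α q β 1 b (fun x i j => ξ (x, i, j)) 0 σ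
      = exp ((couplingMatrix Nv β *ᵥ ξ + bias ν N Nv b) σ) :=
    (bw_eq_exp Nv α q β 1 b ξ 0 σ).trans (by simp)
  simp only [Z, hbw]
  rw [log_div (sum_exp_pos _).ne' (by positivity), log_pow, Nat.cast_mul, logPartition]

lemma integral_log_Z_one (α q : Fin ν → ℝ) (β : ℝ) (b : Fin ν → ℝ) :
    ∫ ξ, 1 / (N : ℝ) * log (Z ν N Nv α q β 1 b ξ 0) ∂μW ν N
      = 1 / N * (∫ ξ, logPartition (couplingMatrix Nv β *ᵥ ξ + bias ν N Nv b)
          ∂gaussianPi (Fin ν × Fin N × Fin N) - ν * N * log 2) := by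
  simp only [integral_μW, log_Z_one]
  rw [integral_const_mul, integral_sub (integrable_logPartition (integrable_mulVec_add _ _))
    (integrable_const _), integral_const, probReal_univ, one_smul]

end Energies

section Covariance

variable {ν N : ℕ} {Nv : Fin ν → ℕ}

lemma sum_activeSpin_mul_activeSpin {x : Fin ν} (hx : 0 < Nv x) (σ τ : Config ν N) :
    ∑ i, activeSpin Nv σ x i * activeSpin Nv τ x i = Nv x * ovl ν N Nv x σ τ := by
  rw [ovl, mul_div_cancel₀ _ (Nat.cast_ne_zero.2 hx.ne')]
  congr! 1 with i
  simp only [activeSpin]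
  split_ifs <;> simp

lemma sum_nextSpin_mul_nextSpin (hNv : ∀ x, 0 < Nv x) (x : Fin ν) (σ τ : Config ν N) :
    ∑ j, nextSpin Nv σ x j * nextSpin Nv τ x j
      = ∑ y : Fin ν, if (y : ℕ) = x + 1 then Nv y * ovl ν N Nv y σ τ else 0 := by
  rw [sum_ite_val_eq_succ x fun y => Nv y * ovl ν N Nv y σ τ]
  unfold nextSpin
  split_ifs with h
  · exact sum_activeSpin_mul_activeSpin (hNv _) σ τ
  · simp

lemma sum_couplingMatrix_mul_couplingMatrix (hNv : ∀ x, 0 < Nv x) (β : ℝ) (σ τ : Config ν N) :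
    ∑ k, couplingMatrix Nv β σ k * couplingMatrix Nv β τ k
      = β ^ 2 / N * adjSum ν fun x y =>
          (Nv x * ovl ν N Nv x σ τ) * (Nv y * ovl ν N Nv y σ τ) := by
  have hfactor (x : Fin ν) (i j : Fin N) :
      β / √N * (activeSpin Nv σ x i * nextSpin Nv σ x j)
          * (β / √N * (activeSpin Nv τ x i * nextSpin Nv τ x j))
        = β ^ 2 / N * ((activeSpin Nv σ x i * activeSpin Nv τ x i)
          * (nextSpin Nv σ x j * nextSpin Nv τ x j)) := by
    rw [mul_mul_mul_comm, div_mul_div_comm, mul_self_sqrt N.cast_nonneg, ← sq,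
      mul_mul_mul_comm (activeSpin Nv σ x i)]
  simp only [couplingMatrix, of_apply, Fintype.sum_prod_type, hfactor,
    ← Finset.mul_sum, ← Finset.sum_mul, sum_activeSpin_mul_activeSpin (hNv _),
    sum_nextSpin_mul_nextSpin hNv, adjSum]
  simp only [Finset.mul_sum, mul_ite, mul_zero]

lemma sum_fieldMatrix_mul_fieldMatrix (hNv : ∀ x, 0 < Nv x) {α q : Fin ν → ℝ}
    (hQ : ∀ x, 0 ≤ Qv ν α q x) (β : ℝ) (σ τ : Config ν N) :
    ∑ k, fieldMatrix Nv α q β σ k * fieldMatrix Nv α q β τ k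
      = β ^ 2 * ∑ x, Qv ν α q x * (Nv x * ovl ν N Nv x σ τ) := by
  have hfactor (x : Fin ν) (i : Fin N) :
      -(β * √(Qv ν α q x)) * activeSpin Nv σ x i * (-(β * √(Qv ν α q x)) * activeSpin Nv τ x i)
        = β ^ 2 * (Qv ν α q x * (activeSpin Nv σ x i * activeSpin Nv τ x i)) := by
    linear_combination β ^ 2 * activeSpin Nv σ x i * activeSpin Nv τ x i * mul_self_sqrt (hQ x)
  simp only [fieldMatrix, of_apply, Fintype.sum_prod_type, hfactor,
    ← Finset.mul_sum, sum_activeSpin_mul_activeSpin (hNv _)]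

-- Completing the product: `R_x R_y - q_y R_x - q_x R_y = (R_x - q_x) (R_y - q_y) - q_x q_y`.
lemma covarianceGap_eq_adjSum (hN : 0 < N) (hNv : ∀ x, 0 < Nv x) {α q : Fin ν → ℝ}
    (hα : ∀ x, α x = Nv x / N) (hQ : ∀ x, 0 ≤ Qv ν α q x) (β : ℝ) (σ τ : Config ν N) :
    covarianceGap (couplingMatrix Nv β) (fieldMatrix Nv α q β) σ τ
      = N * β ^ 2 * adjSum ν fun x y => α x * α y *
          ((ovl ν N Nv x σ τ - q x) * (ovl ν N Nv y σ τ - q y) - q x * q y) := by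
  have hNv_eq (x : Fin ν) : (Nv x : ℝ) = N * α x := by
    rw [hα, mul_div_cancel₀ _ (Nat.cast_ne_zero.2 hN.ne')]
  rw [covarianceGap_apply, sum_couplingMatrix_mul_couplingMatrix hNv,
    sum_fieldMatrix_mul_fieldMatrix hNv hQ, sum_Qv_mul]
  simp only [adjSum_eq_sum, Finset.mul_sum, ← Finset.sum_sub_distrib, hNv_eq]
  refine Finset.sum_congr rfl fun p _ => ?_
  field_simp
  ring

lemma ovl_self {x : Fin ν} (hx : 0 < Nv x) (hle : Nv x ≤ N) (σ : Config ν N) :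
    ovl ν N Nv x σ σ = 1 := by
  have hsq (s : Bool) : sg s * sg s = 1 := by cases s <;> simp [sg]
  simp only [ovl, hsq]
  rw [sum_fin_ite_val_lt hle, mul_one, div_self (Nat.cast_ne_zero.2 hx.ne')]

lemma covarianceGap_self_sub_eq_adjSum (hN : 0 < N) (hNv : ∀ x, 0 < Nv x)
    (hle : ∀ x, Nv x ≤ N) {α q : Fin ν → ℝ} (hα : ∀ x, α x = Nv x / N)
    (hQ : ∀ x, 0 ≤ Qv ν α q x) (β : ℝ) (σ τ : Config ν N) :
    covarianceGap (couplingMatrix Nv β) (fieldMatrix Nv α q β) σ σ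
        - covarianceGap (couplingMatrix Nv β) (fieldMatrix Nv α q β) σ τ
      = N * β ^ 2 * (adjSum ν (fun x y => α x * α y * (1 - q x) * (1 - q y))
          - adjSum ν fun x y => α x * α y *
            ((ovl ν N Nv x σ τ - q x) * (ovl ν N Nv y σ τ - q y))) := by
  simp only [covarianceGap_eq_adjSum hN hNv hα hQ, ovl_self (hNv _) (hle _),
    adjSum_eq_sum, ← mul_sub, ← Finset.sum_sub_distrib]
  congr! 2
  ring

end Covariance

section DecoupledSpins

lemma logPartition_mul_sg (z : ℝ) :
    logPartition (fun s => z * sg s) = log 2 + log (cosh z) := by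
  rw [← log_mul two_ne_zero (cosh_pos z).ne', cosh_eq, mul_div_cancel₀ _ two_ne_zero]
  simp [logPartition, sg]

lemma integrable_log_cosh_gaussianReal {m : ℝ} {v : NNReal} (b c : ℝ) :
    Integrable (fun x => log (cosh (b + c * x))) (gaussianReal m v) := by
  have henergy : Integrable (fun x s => (b + c * x) * sg s) (gaussianReal m v) :=
    Integrable.of_eval fun s =>
      ((integrable_const b).add ((integrable_id_gaussianReal m v).const_mul c)).mul_const (sg s)
  refine ((integrable_logPartition henergy).sub (integrable_const (log 2))).congr
    (ae_of_all _ fun x => ?_)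
  simp [logPartition_mul_sg]

variable {ν N : ℕ} {Nv : Fin ν → ℕ}

lemma logPartition_fieldMatrix_mulVec_add_bias (α q : Fin ν → ℝ) (β : ℝ) (b : Fin ν → ℝ)
    (η : Fin ν × Fin N → ℝ) :
    logPartition (fieldMatrix Nv α q β *ᵥ η + bias ν N Nv b)
      = ν * N * log 2 + ∑ x, ∑ i : Fin N, if (i : ℕ) < Nv x
          then log (cosh (b x + -(β * √(Qv ν α q x)) * η (x, i))) else 0 := by
  have henergy : fieldMatrix Nv α q β *ᵥ η + bias ν N Nv b
      = fun σ : Config ν N => ∑ x, ∑ i : Fin N, (if (i : ℕ) < Nv x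
          then b x + -(β * √(Qv ν α q x)) * η (x, i) else 0) * sg (σ x i) := by
    ext σ
    simp only [Pi.add_apply, mulVec, dotProduct, fieldMatrix, activeSpin, of_apply, bias,
      Fintype.sum_prod_type, Finset.mul_sum, ← Finset.sum_add_distrib]
    congr! 2
    split_ifs <;> ring
  rw [henergy, logPartition_sum_eval fun x (s : Fin N → Bool) => ∑ i : Fin N, (if (i : ℕ) < Nv x
      then b x + -(β * √(Qv ν α q x)) * η (x, i) else 0) * sg (s i)]
  have hlayer (x : Fin ν) := logPartition_sum_eval fun (i : Fin N) s => (if (i : ℕ) < Nv x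
      then b x + -(β * √(Qv ν α q x)) * η (x, i) else 0) * sg s
  simp only [hlayer, logPartition_mul_sg, apply_ite cosh, apply_ite log, cosh_zero, log_one]
  simp [Finset.sum_add_distrib, mul_assoc]

lemma integral_logPartition_fieldMatrix (hle : ∀ x, Nv x ≤ N) (α q : Fin ν → ℝ) (β : ℝ)
    (b : Fin ν → ℝ) :
    ∫ η, logPartition (fieldMatrix Nv α q β *ᵥ η + bias ν N Nv b) ∂gaussianPi (Fin ν × Fin N)
      = ν * N * log 2 + ∑ x, Nv x *
          ∫ η, log (cosh (b x + β * η * √(Qv ν α q x))) ∂gaussianReal 0 1 := by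
  have hsign (x : Fin ν) :
      ∫ η, log (cosh (b x + -(β * √(Qv ν α q x)) * η)) ∂gaussianReal 0 1
        = ∫ η, log (cosh (b x + β * η * √(Qv ν α q x))) ∂gaussianReal 0 1 := by
    rw [← integral_comp_neg_gaussianReal]
    congr! 4
    ring
  have hsite (x : Fin ν) (i : Fin N) : Integrable (fun η : Fin ν × Fin N → ℝ =>
      if (i : ℕ) < Nv x then log (cosh (b x + -(β * √(Qv ν α q x)) * η (x, i))) else 0)
      (gaussianPi (Fin ν × Fin N)) := by
    split_ifs
    · exact integrable_comp_eval (μ := fun _ => gaussianReal 0 1) (i := (x, i))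
        (integrable_log_cosh_gaussianReal (b x) _)
    · exact integrable_zero _ _ _
  have hsite_integral (x : Fin ν) (i : Fin N) :
      ∫ η : Fin ν × Fin N → ℝ, (if (i : ℕ) < Nv x
          then log (cosh (b x + -(β * √(Qv ν α q x)) * η (x, i))) else 0)
          ∂gaussianPi (Fin ν × Fin N)
        = if (i : ℕ) < Nv x
          then ∫ η, log (cosh (b x + β * η * √(Qv ν α q x))) ∂gaussianReal 0 1 else 0 := by
    split_ifs
    · rw [← hsign]
      exact integral_comp_eval (μ := fun _ => gaussianReal 0 1) (i := (x, i))
        (integrable_log_cosh_gaussianReal (b x) _).1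
    · exact integral_zero _ _
  simp only [logPartition_fieldMatrix_mulVec_add_bias]
  rw [integral_add (integrable_const _) (integrable_finsetSum _ fun x _ =>
      integrable_finsetSum _ fun i _ => hsite x i), integral_const, probReal_univ, one_smul,
    integral_finsetSum _ fun x _ => integrable_finsetSum _ fun i _ => hsite x i]
  simp only [integral_finsetSum _ fun i _ => hsite _ i, hsite_integral,
    sum_fin_ite_val_lt (hle _)]

end DecoupledSpins

section SumRule

variable {ν N : ℕ} {Nv : Fin ν → ℕ}

lemma Qv_nonneg {α q : Fin ν → ℝ} (hα : ∀ x, 0 ≤ α x) (hq : ∀ x, 0 ≤ q x) (x : Fin ν) :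
    0 ≤ Qv ν α q x :=
  Finset.sum_nonneg fun y _ => ite_nonneg (mul_nonneg (hα y) (hq y)) le_rfl

lemma interpolatedMean_const_sub_adjSum {S K L : Type*} [Fintype S] [Nonempty S] [Fintype K]
    [Fintype L] (W : Matrix S K ℝ) (F : Matrix S L ℝ) (h : S → ℝ) (c : ℝ) (a : Fin ν → Fin ν → ℝ)
    (f : Fin ν → Fin ν → S × S → ℝ) :
    interpolatedMean W F h (fun p => c - adjSum ν fun x y => a x y * f x y p)
      = c - adjSum ν fun x y => a x y * interpolatedMean W F h (f x y) := by
  have hlinear : (fun p => c - adjSum ν fun x y => a x y * f x y p)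
      = c • (1 : S × S → ℝ)
        - ∑ k : Fin ν × Fin ν with (k.2 : ℕ) = k.1 + 1, a k.1 k.2 • f k.1 k.2 := by
    ext p
    simp [adjSum_eq_sum]
  rw [hlinear]
  simp only [adjSum_eq_sum, map_sub, map_smul, map_sum, interpolatedMean_one, smul_eq_mul, mul_one]

lemma integral_logPartition_couplingMatrix_sub_fieldMatrix (hN : 0 < N) (hNv : ∀ x, 0 < Nv x)
    (hle : ∀ x, Nv x ≤ N) {α q : Fin ν → ℝ} (hα : ∀ x, α x = Nv x / N)
    (hQ : ∀ x, 0 ≤ Qv ν α q x) (β : ℝ) (b : Fin ν → ℝ) :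
    ∫ ξ, logPartition (couplingMatrix Nv β *ᵥ ξ + bias ν N Nv b)
          ∂gaussianPi (Fin ν × Fin N × Fin N)
        - ∫ η, logPartition (fieldMatrix Nv α q β *ᵥ η + bias ν N Nv b)
          ∂gaussianPi (Fin ν × Fin N)
      = N * (β ^ 2 / 2) * (adjSum ν (fun x y => α x * α y * (1 - q x) * (1 - q y))
          - adjSum ν fun x y => α x * α y *
            ∫ t in (0 : ℝ)..1, ∫ ξ, ∫ η, gibbs2 ν N Nv α q β t b ξ η
              (fun σ τ => (ovl ν N Nv x σ τ - q x) * (ovl ν N Nv y σ τ - q y))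
              ∂μF ν N ∂μW ν N) := by
  rw [integral_logPartition_sub_eq_interpolatedMean]
  simp only [covarianceGap_self_sub_eq_adjSum hN hNv hle hα hQ, integral_gibbs2_eq_interpolatedMean]
  rw [interpolatedMean_const_mul, interpolatedMean_const_sub_adjSum]
  ring

end SumRule

theorem sum_rule_general {ν N : ℕ} (hN : 0 < N) {Nv : Fin ν → ℕ} (hNv : ∀ x, 0 < Nv x)
    (hle : ∀ x, Nv x ≤ N) (β : ℝ) (b : Fin ν → ℝ) {α q : Fin ν → ℝ}
    (hα : ∀ x, α x = Nv x / N) (hQ : ∀ x, 0 ≤ Qv ν α q x) :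
    (∫ ξ, 1 / (N : ℝ) * log (Z ν N Nv α q β 1 b ξ 0) ∂μW ν N)
        + β ^ 2 / 2 * adjSum ν (fun x y => α x * α y *
          ∫ t in (0 : ℝ)..1, ∫ ξ, ∫ η, gibbs2 ν N Nv α q β t b ξ η
            (fun σ τ => (ovl ν N Nv x σ τ - q x) * (ovl ν N Nv y σ τ - q y))
            ∂μF ν N ∂μW ν N)
      = (∑ x, α x * ∫ η, log (cosh (b x + β * η * √(Qv ν α q x))) ∂gaussianReal 0 1)
        + β ^ 2 / 2 * adjSum ν (fun x y => α x * α y * (1 - q x) * (1 - q y)) := by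
  have hN' : (N : ℝ) ≠ 0 := Nat.cast_ne_zero.2 hN.ne'
  have hinterpolation :=
    integral_logPartition_couplingMatrix_sub_fieldMatrix hN hNv hle hα hQ β b
  have hdecoupled := integral_logPartition_fieldMatrix hle α q β b
  have hfractions (E : Fin ν → ℝ) : ∑ x, α x * E x = 1 / N * ∑ x, Nv x * E x := by
    rw [Finset.mul_sum]
    exact Finset.sum_congr rfl fun x _ => by rw [hα]; ring
  rw [integral_log_Z_one, hfractions, sub_eq_iff_eq_add.1 hinterpolation, hdecoupled]
  field_simp
  ring

/-- interpolation sum rule, Lemma 1 of the paper: for every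
`q ∈ [0,1]^ν`,
`E[A_N(β)] + (β²/2) Σ_{|x−y|=1} α_x α_y ∫₀¹ E⟨(R^x−q_x)(R^y−q_y)⟩_t dt
  = Σ_x α_x E_{0,1}[log cosh(b_x + βη√(Σ_{|y−x|=1}α_y q_y))]
    + (β²/2) Σ_{|x−y|=1} α_x α_y (1−q_x)(1−q_y)`. -/
theorem sum_rule
    (ν N : ℕ) (hν : 2 ≤ ν) (hN : 0 < N)
    (Nv : Fin ν → ℕ) (hNv : ∀ x, 0 < Nv x) (hsum : ∑ x, Nv x = N)
    (β : ℝ) (hβ : 0 ≤ β) (b : Fin ν → ℝ)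
    (q : Fin ν → ℝ) (hq : ∀ x, q x ∈ Icc (0:ℝ) 1)
    (α : Fin ν → ℝ) (hα : ∀ x, α x = (Nv x : ℝ) / N) :
    (∫ ξ, (1 / (N:ℝ)) * Real.log (Z ν N Nv α q β 1 b ξ 0) ∂(μW ν N)) +
      β ^ 2 / 2 * adjSum ν (fun x y => α x * α y *
        ∫ t in (0:ℝ)..1, ∫ ξ, ∫ η,
          gibbs2 ν N Nv α q β t b ξ η
            (fun σ τ => (ovl ν N Nv x σ τ - q x) * (ovl ν N Nv y σ τ - q y))
          ∂(μF ν N) ∂(μW ν N)) =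
    (∑ x : Fin ν, α x *
        ∫ η, Real.log (Real.cosh (b x + β * η * Real.sqrt (Qv ν α q x)))
          ∂(gaussianReal 0 1)) +
      β ^ 2 / 2 * adjSum ν (fun x y => α x * α y * (1 - q x) * (1 - q y)) := by
  have hle (x : Fin ν) : Nv x ≤ N :=
    hsum ▸ Finset.single_le_sum (fun y _ => (Nv y).zero_le) (Finset.mem_univ x)
  have hα_nonneg (x : Fin ν) : 0 ≤ α x := hα x ▸ by positivity
  exact sum_rule_general hN hNv hle β b hα (Qv_nonneg hα_nonneg fun x => (hq x).1)

end DRBM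
end
end
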